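/- arXiv:0804.3261 — 3 statements merged into one kernel-verified Lean document; each statement's English description precedes it below -/
import Mathlib

section
/- The set function ρ(J) = log₂ det(Σ_{k ∈ J} q_k h_k† h_k + I), defined on subsets J of {1,…,K}, is submodular: ρ(J₁ ∪ J₂) + ρ(J₁ ∩ J₂) ≤ ρ(J₁) + ρ(J₂) for all J₁, J₂ ⊆ {1,…,K}. Moreover ρ is nondecreasing and ρ(∅) = 0, so the capacity region of the Gaussian multiple-access channel is a polymatroid. -/
open Matrix

open scoped ComplexOrder in
theorem aux_inv_anti {n : ℕ} {A C : Matrix (Fin n) (Fin n) ℂ} (hA : A.PosDef)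
    (hC : C.PosSemidef) : (A⁻¹ - (A + C)⁻¹).PosSemidef := by
  have hB : (A + C).PosDef := hA.add_posSemidef hC
  have uA : IsUnit A.det := (Matrix.isUnit_iff_isUnit_det A).1 hA.isUnit
  have uB : IsUnit (A + C).det := (Matrix.isUnit_iff_isUnit_det _).1 hB.isUnit
  obtain ⟨B, hBe⟩ : ∃ B, B = A + C := ⟨_, rfl⟩
  rw [← hBe] at hB uB ⊢
  have hCe : C = B - A := by rw [hBe]; abel
  have hH : (A⁻¹ - B⁻¹)ᴴ = A⁻¹ - B⁻¹ := by
    rw [conjTranspose_sub, hA.inv.isHermitian.eq, hB.inv.isHermitian.eq]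
  have h1 := hA.posSemidef.mul_mul_conjTranspose_same (A⁻¹ - B⁻¹)
  have h2 := hC.mul_mul_conjTranspose_same (B⁻¹)
  rw [hH] at h1
  rw [hB.inv.isHermitian.eq, hCe] at h2
  convert h1.add h2 using 1
  have e1 : A⁻¹ * A = 1 := nonsing_inv_mul A uA
  have e2 : B⁻¹ * B = 1 := nonsing_inv_mul B uB
  have e3 : A * A⁻¹ = 1 := mul_nonsing_inv A uA
  simp only [sub_mul, mul_sub, e1, e2, one_mul, Matrix.mul_assoc B⁻¹ A A⁻¹, e3, mul_one]
  abel

theorem aux_det {n : ℕ} {A : Matrix (Fin n) (Fin n) ℂ} (hA : IsUnit A.det) (c : ℝ)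
    (v : Fin n → ℂ) :
    (A + c • vecMulVec (star ∘ v) v).det = A.det * (1 + c * (v ⬝ᵥ A⁻¹ *ᵥ (star v))) := by
  have h := det_add_replicateCol_mul_replicateRow (ι := Unit) hA ((c : ℂ) • star v) v
  have e : replicateCol Unit ((c : ℂ) • star v) * replicateRow Unit v
      = c • vecMulVec (star ∘ v) v := by
    ext i j
    simp [Matrix.mul_apply, vecMulVec_apply, mul_assoc]
  rw [e] at h
  rw [h]
  congr 1
  rw [det_unique, Matrix.mul_assoc, Matrix.add_apply, Matrix.one_apply_eq]
  congr 1
  have : (replicateRow Unit v * (A⁻¹ * replicateCol Unit ((c : ℂ) • star v))) default default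
      = v ⬝ᵥ A⁻¹ *ᵥ ((c : ℂ) • star v) := rfl
  rw [this, mulVec_smul, dotProduct_smul, smul_eq_mul]

open scoped ComplexOrder in
theorem aux_psd {n : ℕ} {c : ℝ} (hc : 0 ≤ c) (v : Fin n → ℂ) :
    (c • vecMulVec (star ∘ v) v).PosSemidef := 
  (posSemidef_vecMulVec_star_self v).smul hc

open scoped ComplexOrder in
theorem aux_pos {n : ℕ} {A : Matrix (Fin n) (Fin n) ℂ} (hA : A.PosDef) :
    0 < A.det.re ∧ A.det.im = 0 := by
  have := hA.det_pos
  rw [Complex.lt_def] at this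
  exact ⟨by simpa using this.1, by simpa using this.2.symm⟩

open scoped ComplexOrder in
theorem aux_quad {n : ℕ} {A : Matrix (Fin n) (Fin n) ℂ} (hA : A.PosSemidef) (v : Fin n → ℂ) :
    0 ≤ (v ⬝ᵥ A *ᵥ (star v)).re := by
  have := hA.dotProduct_mulVec_nonneg (star v)
  rw [star_star, Complex.le_def] at this
  simpa using this.1

open scoped ComplexOrder in
theorem aux_det_re {n : ℕ} {A : Matrix (Fin n) (Fin n) ℂ} (hA : A.PosDef) (c : ℝ)
    (v : Fin n → ℂ) :
    (A + c • vecMulVec (star ∘ v) v).det.re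
      = A.det.re * (1 + c * (v ⬝ᵥ A⁻¹ *ᵥ (star v)).re) := by
  rw [aux_det ((Matrix.isUnit_iff_isUnit_det A).1 hA.isUnit), Complex.mul_re, (aux_pos hA).2]
  simp

open scoped ComplexOrder in
theorem aux_gain {n : ℕ} {A C : Matrix (Fin n) (Fin n) ℂ} (hA : A.PosDef)
    (hC : C.PosSemidef) {c : ℝ} (hc : 0 ≤ c) (v : Fin n → ℂ) :
    Real.logb 2 (A + C + c • vecMulVec (star ∘ v) v).det.re - Real.logb 2 (A + C).det.re ≤
    Real.logb 2 (A + c • vecMulVec (star ∘ v) v).det.re - Real.logb 2 A.det.re ∧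
    Real.logb 2 A.det.re ≤ Real.logb 2 (A + c • vecMulVec (star ∘ v) v).det.re := by
  have hB : (A + C).PosDef := hA.add_posSemidef hC
  have a0 := mul_nonneg hc (aux_quad hA.inv.posSemidef v)
  have b0 := mul_nonneg hc (aux_quad hB.inv.posSemidef v)
  have ab := aux_quad (aux_inv_anti hA hC) v
  rw [sub_mulVec, dotProduct_sub, Complex.sub_re] at ab
  have ab' := mul_le_mul_of_nonneg_left (sub_nonneg.1 ab) hc
  rw [aux_det_re hA, aux_det_re hB,
    Real.logb_mul (aux_pos hA).1.ne' (by positivity),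
    Real.logb_mul (aux_pos hB).1.ne' (by positivity)]
  have l1 := Real.logb_le_logb_of_le (b := 2) (by norm_num) (by positivity)
    (add_le_add_right ab' 1)
  have l2 := Real.logb_nonneg (b := 2) (by norm_num) (le_add_of_nonneg_right a0)
  constructor <;> linarith

/-- The set function `ρ(J) = log₂ det(∑_{k∈J} qₖ hₖ† hₖ + I)` is submodular, nondecreasing,
and vanishes at `∅` (the polymatroid structure of the MAC capacity region). -/
theorem mac_rank_function_polymatroid {M K : ℕ} (h : Fin K → Fin M → ℂ)
    (q : Fin K → ℝ) (hq : ∀ k, 0 ≤ q k)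
    (ρ : Finset (Fin K) → ℝ)
    (hρ : ∀ J : Finset (Fin K), ρ J = Real.logb 2
      (((∑ k ∈ J, q k • Matrix.vecMulVec (star ∘ h k) (h k)) + 1 :
          Matrix (Fin M) (Fin M) ℂ).det.re)) :
    (∀ J₁ J₂ : Finset (Fin K), ρ (J₁ ∪ J₂) + ρ (J₁ ∩ J₂) ≤ ρ J₁ + ρ J₂) ∧
    (∀ J₁ J₂ : Finset (Fin K), J₁ ⊆ J₂ → ρ J₁ ≤ ρ J₂) ∧
    ρ ∅ = 0 := by
  open scoped ComplexOrder in
  have psd : ∀ J : Finset (Fin K),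
      (∑ k ∈ J, q k • Matrix.vecMulVec (star ∘ h k) (h k)).PosSemidef := fun J =>
    posSemidef_sum J fun k _ => aux_psd (hq k) (h k)
  have pd : ∀ J : Finset (Fin K),
      ((∑ k ∈ J, q k • Matrix.vecMulVec (star ∘ h k) (h k)) + 1).PosDef := fun J =>
    PosDef.posSemidef_add (psd J) PosDef.one
  have key : ∀ (S T : Finset (Fin K)) (a : Fin K), S ⊆ T → a ∉ T →
      ρ (insert a T) - ρ T ≤ ρ (insert a S) - ρ S ∧ ρ S ≤ ρ (insert a S) := by
    intro S T a hST ha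
    have := aux_gain (pd S) (psd (T \ S)) (hq a) (h a)
    have e : (∑ k ∈ S, q k • Matrix.vecMulVec (star ∘ h k) (h k)) + 1
        + (∑ k ∈ T \ S, q k • Matrix.vecMulVec (star ∘ h k) (h k))
        = (∑ k ∈ T, q k • Matrix.vecMulVec (star ∘ h k) (h k)) + 1 := by
      rw [← Finset.sum_sdiff hST]; abel
    have i : ∀ J : Finset (Fin K), a ∉ J →
        ρ (insert a J) = Real.logb 2 ((∑ k ∈ J, q k • Matrix.vecMulVec (star ∘ h k) (h k)) + 1
          + q a • Matrix.vecMulVec (star ∘ h a) (h a)).det.re := by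
      intro J hJ
      rw [hρ, Finset.sum_insert hJ, add_comm (q a • _), add_right_comm]
    rw [e, ← i T ha, ← i S (fun h' => ha (hST h')), ← hρ, ← hρ] at this
    exact this
  refine ⟨?_, ?_, ?_⟩
  · have sub : ∀ (S T U : Finset (Fin K)), S ⊆ T → Disjoint T U →
        ρ (T ∪ U) - ρ T ≤ ρ (S ∪ U) - ρ S := by
      intro S T U hST
      induction U using Finset.induction_on with
      | empty => simp
      | insert a U ha ih =>
        intro hd
        rw [Finset.disjoint_insert_right] at hd
        have h1 := ih hd.2
        have h2 := (key (S ∪ U) (T ∪ U) a (Finset.union_subset_union_left hST)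
          (by simp [hd.1, ha])).1
        rw [Finset.union_insert, Finset.union_insert]
        linarith
    intro J₁ J₂
    have := sub (J₁ ∩ J₂) J₁ (J₂ \ J₁) Finset.inter_subset_left Finset.disjoint_sdiff
    have e1 : J₁ ∪ J₂ \ J₁ = J₁ ∪ J₂ := by simp
    have e2 : (J₁ ∩ J₂) ∪ J₂ \ J₁ = J₂ := by ext x; simp; tauto
    rw [e1, e2] at this
    linarith
  · intro J₁ J₂ hJ
    have mono : ∀ U : Finset (Fin K), ρ J₁ ≤ ρ (J₁ ∪ U) := by
      intro U
      induction U using Finset.induction_on with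
      | empty => simp
      | insert a U ha ih =>
        rw [Finset.union_insert]
        by_cases h' : a ∈ J₁ ∪ U
        · rwa [Finset.insert_eq_of_mem h']
        · exact ih.trans (key _ _ a (Finset.Subset.refl _) h').2
    simpa [Finset.union_eq_right.2 hJ] using mono J₂
  · rw [hρ]; simp
end

section
/- Let β₁ ≥ … ≥ β_K ≥ 0 with β_{K+1}=0, h_k ∈ ℂ^M, and define the objective Φ(q) = Σ_k q_k − Σ_{k=1}^K (β_k − β_{k+1}) log₂ det(Σ_{i=1}^k q_i h_i† h_i + I) for q ∈ ℝ₊^K. Fix m and all q_i for i ≠ m, and let d(t) = Σ_{k=m}^K (β_k − β_{k+1}) · h_m (t·h_m† h_m + Σ_{i≤k, i≠m} q_i h_i† h_i + I)^{-1} h_m†. Then d is nonincreasing in t ≥ 0, and the minimizer of Φ over q_m ≥ 0 is q_m* = 0 if d(0) ≤ ln 2, and otherwise q_m* is the unique root of d(t) = ln 2. -/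
open Matrix

/-- The rank-one outer product `h† h` of a row vector `h`. -/
noncomputable def outerH {M : ℕ} (h : Fin M → ℂ) : Matrix (Fin M) (Fin M) ℂ :=
  Matrix.vecMulVec (star ∘ h) h

/-- The quadratic form `h A⁻¹ h†`. -/
noncomputable def qformInv {M : ℕ} (h : Fin M → ℂ) (A : Matrix (Fin M) (Fin M) ℂ) : ℝ :=
  (h ⬝ᵥ (A⁻¹ *ᵥ (star ∘ h))).re

open ComplexOrder in
lemma aux_matrix {M : ℕ} (h : Fin M → ℂ) (B : Matrix (Fin M) (Fin M) ℂ) (hB : B.PosDef)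
    (t : ℝ) (ht : 0 ≤ t) :
    0 ≤ qformInv h B ∧ 0 < B.det.re ∧
    (B + t • outerH h).det.re = B.det.re * (1 + t * qformInv h B) ∧
    qformInv h (B + t • outerH h) = qformInv h B / (1 + t * qformInv h B) := by
  have hnn : (0 : ℂ) ≤ h ⬝ᵥ (B⁻¹ *ᵥ (star ∘ h)) := by
    have := hB.inv.posSemidef.dotProduct_mulVec_nonneg (star h)
    rw [star_star] at this
    exact this
  have hdet : (0 : ℂ) < B.det := hB.det_pos
  have hc := Complex.nonneg_iff.mp hnn
  have hdd := Complex.pos_iff.mp hdet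
  have hcz : h ⬝ᵥ (B⁻¹ *ᵥ (star ∘ h)) = ((qformInv h B : ℝ) : ℂ) := by
    apply Complex.ext
    · simp [qformInv]
    · simpa using hc.2.symm
  have hc0 : 0 ≤ qformInv h B := hc.1
  set c := qformInv h B with hcdef
  have hpos : 0 < 1 + t * c := by positivity
  have hunit : IsUnit B.det := isUnit_iff_ne_zero.mpr (ne_of_gt hdet)
  have hdetz : (B + t • outerH h).det = B.det * ((1 + t * c : ℝ) : ℂ) := by
    have e : t • outerH h = replicateCol Unit ((t : ℂ) • (star ∘ h)) * replicateRow Unit h := by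
      rw [← vecMulVec_eq]
      ext i j
      simp [outerH, vecMulVec_apply, mul_assoc]
    rw [e, det_add_replicateCol_mul_replicateRow hunit]
    congr 1
    rw [det_unique, Matrix.add_apply, Matrix.one_apply_eq, Matrix.mul_assoc,
      ← replicateCol_mulVec, replicateRow_mul_replicateCol_apply, mulVec_smul, dotProduct_smul, hcz]
    simp
  have hpz : (((1 + t * c : ℝ)) : ℂ) ≠ 0 := by exact_mod_cast hpos.ne'
  refine ⟨hc0, hdd.1, ?_, ?_⟩
  · rw [hdetz, Complex.re_mul_ofReal]
  · have hunit' : IsUnit (B + t • outerH h).det := by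
      rw [hdetz, isUnit_iff_ne_zero]
      exact mul_ne_zero (ne_of_gt hdet) hpz
    have key : (B + t • outerH h) *ᵥ (B⁻¹ *ᵥ (star ∘ h)) = ((1 + t * c : ℝ) : ℂ) • (star ∘ h) := by
      rw [add_mulVec, mulVec_mulVec, mul_nonsing_inv _ hunit, one_mulVec, smul_mulVec, outerH,
        vecMulVec_mulVec, hcz]
      ext i
      simp
      ring
    have key2 : (B + t • outerH h)⁻¹ *ᵥ (star ∘ h)
        = (((1 + t * c : ℝ) : ℂ))⁻¹ • (B⁻¹ *ᵥ (star ∘ h)) := by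
      have h1 := congrArg (fun v => (B + t • outerH h)⁻¹ *ᵥ v) key
      simp only [mulVec_mulVec, mulVec_smul] at h1
      rw [← Matrix.mul_assoc, nonsing_inv_mul _ hunit', Matrix.one_mul] at h1
      rw [h1, smul_smul, inv_mul_cancel₀ hpz, one_smul]
    rw [qformInv, key2, dotProduct_smul, hcz, smul_eq_mul, ← Complex.ofReal_inv,
      ← Complex.ofReal_mul, Complex.ofReal_re, div_eq_mul_inv, mul_comm]

open ComplexOrder in
lemma aux_posDef {M K : ℕ} (h : Fin K → Fin M → ℂ) (q : Fin K → ℝ) (hq : ∀ k, 0 ≤ q k)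
    (s : Finset (Fin K)) : ((∑ i ∈ s, q i • outerH (h i)) + 1).PosDef := by
  refine Matrix.PosDef.posSemidef_add (posSemidef_sum s fun i _ => ?_) PosDef.one
  exact (posSemidef_vecMulVec_star_self (h i)).smul (hq i)

lemma aux_real {ι : Type*} (S : Finset ι) (w c : ι → ℝ) (hw : ∀ i, 0 ≤ w i) (hc : ∀ i, 0 ≤ c i)
    (L : ℝ) (hL : 0 < L) (d Φ : ℝ → ℝ) (C : ℝ)
    (hd : ∀ t, 0 ≤ t → d t = ∑ k ∈ S, w k * (c k / (1 + t * c k)))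
    (hΦ : ∀ t, 0 ≤ t → Φ t = C + t - ∑ k ∈ S, w k * (Real.log (1 + t * c k) / L)) :
    (∀ s t : ℝ, 0 ≤ s → s ≤ t → d t ≤ d s) ∧
    (d 0 ≤ L → ∀ t, 0 ≤ t → Φ 0 ≤ Φ t) ∧
    (L < d 0 → ∃ t₀ : ℝ, 0 ≤ t₀ ∧ d t₀ = L ∧
        (∀ t, 0 ≤ t → d t = L → t = t₀) ∧ (∀ t, 0 ≤ t → Φ t₀ ≤ Φ t)) := by
  have hp : ∀ t, 0 ≤ t → ∀ k, 0 < 1 + t * c k := fun t ht k => by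
    have := hc k
    positivity
  have hmono : ∀ s t : ℝ, 0 ≤ s → s ≤ t → d t ≤ d s := by
    intro s t hs hst
    rw [hd s hs, hd t (hs.trans hst)]
    refine Finset.sum_le_sum fun k _ => mul_le_mul_of_nonneg_left ?_ (hw k)
    refine div_le_div_of_nonneg_left (hc k) (hp s hs k) ?_
    nlinarith [hc k]
  have hgrad : ∀ s t : ℝ, 0 ≤ s → 0 ≤ t → (t - s) * (1 - d s / L) ≤ Φ t - Φ s := by
    intro s t hs ht
    have h1 : ∑ k ∈ S, w k * (Real.log (1 + t * c k) / L)
        - ∑ k ∈ S, w k * (Real.log (1 + s * c k) / L) ≤ (t - s) * (d s / L) := by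
      rw [hd s hs, ← Finset.sum_sub_distrib, Finset.sum_div, Finset.mul_sum]
      refine Finset.sum_le_sum fun k _ => ?_
      have a := hp s hs k
      have b := hp t ht k
      have l := Real.log_le_sub_one_of_pos (div_pos b a)
      rw [Real.log_div b.ne' a.ne'] at l
      have e : (1 + t * c k) / (1 + s * c k) - 1 = (t - s) * (c k / (1 + s * c k)) := by
        rw [div_sub_one a.ne', mul_div_assoc']
        congr 1
        ring
      rw [e] at l
      have := mul_le_mul_of_nonneg_left l (div_nonneg (hw k) hL.le)
      calc _ = w k / L * (Real.log (1 + t * c k) - Real.log (1 + s * c k)) := by ring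
        _ ≤ _ := this
        _ = _ := by ring
    rw [hΦ s hs, hΦ t ht]
    linarith
  refine ⟨hmono, ?_, ?_⟩
  · intro h0 t ht
    have := hgrad 0 t le_rfl ht
    have h1 : d 0 / L ≤ 1 := (div_le_one hL).mpr h0
    have : 0 ≤ (t - 0) * (1 - d 0 / L) := mul_nonneg (by linarith) (by linarith)
    linarith
  · intro h0
    have hW : 0 ≤ ∑ k ∈ S, w k := Finset.sum_nonneg fun k _ => hw k
    set T := (∑ k ∈ S, w k + 1) / L with hT
    have hTpos : 0 < T := by positivity
    have hdT : d T ≤ L := by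
      have : d T ≤ ∑ k ∈ S, w k * (1 / T) := by
        rw [hd T hTpos.le]
        refine Finset.sum_le_sum fun k _ => mul_le_mul_of_nonneg_left ?_ (hw k)
        rw [div_le_div_iff₀ (hp T hTpos.le k) hTpos]
        linarith
      rw [← Finset.sum_mul] at this
      refine this.trans ?_
      rw [mul_one_div, div_le_iff₀ hTpos, hT, mul_div_cancel₀ _ hL.ne']
      linarith
    have hcont : ContinuousOn d (Set.Icc 0 T) := by
      have : ContinuousOn (fun t => ∑ k ∈ S, w k * (c k / (1 + t * c k))) (Set.Icc 0 T) := by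
        refine continuousOn_finsetSum _ fun k _ => ?_
        refine continuousOn_const.mul (continuousOn_const.div (by fun_prop) ?_)
        intro t ht
        exact (hp t ht.1 k).ne'
      exact this.congr fun t ht => hd t ht.1
    obtain ⟨t₀, ht₀, hdt₀⟩ := intermediate_value_Icc' hTpos.le hcont ⟨hdT, h0.le⟩
    have hstrict : ∀ s t, 0 ≤ s → s < t → d t < d s := by
      intro s t hs hst
      have hex : ∃ k ∈ S, 0 < w k * c k := by
        by_contra! hne
        have : d 0 ≤ 0 := by
          rw [hd 0 le_rfl]
          refine Finset.sum_nonpos fun k hk => ?_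
          simpa using hne k hk
        linarith
      rw [hd s hs, hd t (hs.trans hst.le)]
      refine Finset.sum_lt_sum (fun k _ => mul_le_mul_of_nonneg_left ?_ (hw k)) ?_
      · refine div_le_div_of_nonneg_left (hc k) (hp s hs k) ?_
        nlinarith [hc k]
      · obtain ⟨k, hk, hkp⟩ := hex
        have hwk : 0 < w k := (hw k).lt_of_ne' fun h => by simp [h] at hkp
        have hck : 0 < c k := (hc k).lt_of_ne' fun h => by simp [h] at hkp
        refine ⟨k, hk, mul_lt_mul_of_pos_left ?_ hwk⟩
        refine div_lt_div_of_pos_left hck (hp s hs k) ?_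
        nlinarith
    refine ⟨t₀, ht₀.1, hdt₀, ?_, ?_⟩
    · intro t ht hdt
      rcases lt_trichotomy t t₀ with hlt | heq | hgt
      · have := hstrict t t₀ ht hlt
        linarith
      · exact heq
      · have := hstrict t₀ t ht₀.1 hgt
        linarith
    · intro t ht
      have := hgrad t₀ t ht₀.1 ht
      rw [hdt₀, div_self hL.ne'] at this
      linarith

/-- Coordinate-descent optimality condition for Problem P3: `d` is nonincreasing on `[0,∞)`;
the minimizer of `Φ` over `q_m ≥ 0` is `0` if `d(0) ≤ ln 2`, and otherwise the unique
nonnegative root of `d(t) = ln 2`. -/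
theorem coordinate_descent_optimality {M K : ℕ} (h : Fin K → Fin M → ℂ) (β : ℕ → ℝ)
    (hβa : Antitone β) (hβ0 : ∀ k, 0 ≤ β k) (hβK : β K = 0)
    (m : Fin K) (q : Fin K → ℝ) (hq : ∀ k, 0 ≤ q k)
    (d : ℝ → ℝ)
    (hd : ∀ t : ℝ, d t = ∑ k ∈ Finset.univ.filter (fun k : Fin K => m ≤ k),
      (β (k : ℕ) - β ((k : ℕ) + 1)) *
        qformInv (h m) (t • outerH (h m) +
          (∑ i ∈ Finset.univ.filter (fun i : Fin K => i ≤ k ∧ i ≠ m), q i • outerH (h i)) + 1))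
    (Φ : ℝ → ℝ)
    (hΦ : ∀ t : ℝ, Φ t = ((∑ i ∈ Finset.univ.filter (fun i : Fin K => i ≠ m), q i) + t) -
      ∑ k : Fin K, (β (k : ℕ) - β ((k : ℕ) + 1)) *
        Real.logb 2
          ((((∑ i ∈ Finset.univ.filter (fun i : Fin K => i ≤ k ∧ i ≠ m), q i • outerH (h i)) +
            (if m ≤ k then t • outerH (h m) else 0) + 1 :
              Matrix (Fin M) (Fin M) ℂ).det.re))) :
    (∀ s t : ℝ, 0 ≤ s → s ≤ t → d t ≤ d s) ∧
    (d 0 ≤ Real.log 2 → ∀ t, 0 ≤ t → Φ 0 ≤ Φ t) ∧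
    (Real.log 2 < d 0 → ∃ t₀ : ℝ, 0 ≤ t₀ ∧ d t₀ = Real.log 2 ∧
        (∀ t, 0 ≤ t → d t = Real.log 2 → t = t₀) ∧ (∀ t, 0 ≤ t → Φ t₀ ≤ Φ t)) := by
  have hw : ∀ k : Fin K, 0 ≤ β (k : ℕ) - β ((k : ℕ) + 1) := fun k =>
    sub_nonneg.mpr (hβa (Nat.le_succ _))
  let B : Fin K → Matrix (Fin M) (Fin M) ℂ := fun k =>
    (∑ i ∈ Finset.univ.filter (fun i : Fin K => i ≤ k ∧ i ≠ m), q i • outerH (h i)) + 1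
  have hB := fun k : Fin K => aux_posDef h q hq
    (Finset.univ.filter (fun i : Fin K => i ≤ k ∧ i ≠ m))
  have hA := fun (k : Fin K) (t : ℝ) (ht : 0 ≤ t) => aux_matrix (h m) (B k) (hB k) t ht
  have hL : 0 < Real.log 2 := Real.log_pos (by norm_num)
  refine aux_real (Finset.univ.filter (fun k : Fin K => m ≤ k))
    (fun k : Fin K => β (k : ℕ) - β ((k : ℕ) + 1)) (fun k => qformInv (h m) (B k)) hw
    (fun k => (hA k 0 le_rfl).1) (Real.log 2) hL d Φ
    ((∑ i ∈ Finset.univ.filter (fun i : Fin K => i ≠ m), q i) -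
      ∑ k : Fin K, (β (k : ℕ) - β ((k : ℕ) + 1)) * (Real.log (B k).det.re / Real.log 2)) ?_ ?_
  · intro t ht
    rw [hd t]
    refine Finset.sum_congr rfl fun k _ => ?_
    rw [← (hA k t ht).2.2.2]
    congr 2
    simp only [B]
    abel
  · intro t ht
    rw [hΦ t, Finset.sum_filter (fun k : Fin K => m ≤ k)]
    have : ∀ a b c e : ℝ, c = b + e → a + t - c = a - b + t - e := fun a b c e h => by
      rw [h]
      ring
    apply this
    rw [← Finset.sum_add_distrib]
    refine Finset.sum_congr rfl fun k _ => ?_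
    obtain ⟨h1, h2, h3, -⟩ := hA k t ht
    rw [Real.logb]
    split_ifs with hk
    · have e : ((∑ i ∈ Finset.univ.filter (fun i : Fin K => i ≤ k ∧ i ≠ m), q i • outerH (h i)) +
            t • outerH (h m) + 1 : Matrix (Fin M) (Fin M) ℂ) = B k + t • outerH (h m) := by
        simp only [B]
        abel
      have h4 : 0 < 1 + t * qformInv (h m) (B k) := by positivity
      rw [e, h3, Real.log_mul h2.ne' h4.ne']
      ring
    · simp only [add_zero, B]
end

section
/- In the setting of the coordinate minimization of Problem P3, if d(0) > ln 2 then the unique root q₀ of d(t) = ln 2 satisfies 0 < q₀ ≤ β_m / ln 2. -/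
open Matrix

open scoped ComplexOrder in
theorem aux_qform {M : ℕ} (v : Fin M → ℂ) (B : Matrix (Fin M) (Fin M) ℂ) (hB : B.PosSemidef)
    (t : ℝ) (ht : 0 ≤ t) : t * qformInv v (t • outerH v + B + 1) ≤ 1 := by
  have hO : (outerH v).PosSemidef := Matrix.posSemidef_vecMulVec_star_self v
  have hB1 : (B + 1).PosSemidef := hB.add Matrix.PosSemidef.one
  have hA : (t • outerH v + B + 1).PosDef :=
    Matrix.PosDef.posSemidef_add ((hO.smul ht).add hB) Matrix.PosDef.one
  set A := t • outerH v + B + 1 with hAdef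
  set x := A⁻¹ *ᵥ (star ∘ v) with hx
  have hAx : A *ᵥ x = star ∘ v := by
    rw [hx, Matrix.mulVec_mulVec, Matrix.mul_nonsing_inv _ ((Matrix.isUnit_iff_isUnit_det _).1 hA.isUnit),
      Matrix.one_mulVec]
  set s := v ⬝ᵥ x with hs
  have h1 : star x ⬝ᵥ (A *ᵥ x) = star s := by
    rw [hAx, hs, ← Matrix.star_dotProduct_star]
    rfl
  have h2 : star x ⬝ᵥ (A *ᵥ x) = (t : ℂ) * (star s * s) + star x ⬝ᵥ ((B + 1) *ᵥ x) := by
    have e : A = t • outerH v + (B + 1) := by rw [hAdef, add_assoc]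
    have h1' : star x ⬝ᵥ (star ∘ v) = star s := by rw [← h1, hAx]
    have e2 : outerH v *ᵥ x = s • (star ∘ v) := by
      rw [outerH, Matrix.vecMulVec_mulVec]
      ext i
      simp [hs, mul_comm]
    rw [e, Matrix.add_mulVec, dotProduct_add, Matrix.smul_mulVec, e2, dotProduct_smul,
      dotProduct_smul, h1', Complex.real_smul, smul_eq_mul]
    ring
  have h3 := hB1.re_dotProduct_nonneg x
  have h4 := congrArg Complex.re (h1.symm.trans h2)
  have h5 : s.re = t * (s.re ^ 2 + s.im ^ 2) + (star x ⬝ᵥ ((B + 1) *ᵥ x)).re := by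
    simp at h4
    linarith
  have h6 : 0 ≤ (star x ⬝ᵥ ((B + 1) *ᵥ x)).re := h3
  show t * s.re ≤ 1
  by_contra hc
  push Not at hc
  have : t * s.re ^ 2 ≤ s.re := by nlinarith [mul_nonneg ht (sq_nonneg s.im)]
  have hp : 0 < s.re := by
    by_contra hn
    push Not at hn
    nlinarith
  nlinarith

/-- If `d(0) > ln 2`, the unique root `q₀` of `d(t) = ln 2` satisfies `0 < q₀ ≤ β_m / ln 2`. -/
theorem root_bound {M K : ℕ} (h : Fin K → Fin M → ℂ) (β : ℕ → ℝ)
    (hβa : Antitone β) (hβ0 : ∀ k, 0 ≤ β k) (hβK : β K = 0)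
    (m : Fin K) (q : Fin K → ℝ) (hq : ∀ k, 0 ≤ q k)
    (d : ℝ → ℝ)
    (hd : ∀ t : ℝ, d t = ∑ k ∈ Finset.univ.filter (fun k : Fin K => m ≤ k),
      (β (k : ℕ) - β ((k : ℕ) + 1)) *
        qformInv (h m) (t • outerH (h m) +
          (∑ i ∈ Finset.univ.filter (fun i : Fin K => i ≤ k ∧ i ≠ m), q i • outerH (h i)) + 1))
    (hd0 : Real.log 2 < d 0)
    (q₀ : ℝ) (hq₀ : 0 ≤ q₀) (hroot : d q₀ = Real.log 2) :
    0 < q₀ ∧ q₀ ≤ β (m : ℕ) / Real.log 2 := by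
  have hl : 0 < Real.log 2 := Real.log_pos (by norm_num)
  have hpos : 0 < q₀ := by
    rcases hq₀.lt_or_eq with h1 | h1
    · exact h1
    · subst h1
      linarith
  refine ⟨hpos, ?_⟩
  rw [le_div_iff₀ hl, ← hroot, hd, Finset.mul_sum]
  have hsum : ∑ k ∈ Finset.univ.filter (fun k : Fin K => m ≤ k),
      (β (k : ℕ) - β ((k : ℕ) + 1)) = β m := by
    have e : ∑ k ∈ Finset.univ.filter (fun k : Fin K => m ≤ k),
      (β (k : ℕ) - β ((k : ℕ) + 1)) = ∑ k ∈ Finset.Ico (m : ℕ) K, (β k - β (k + 1)) := by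
      refine Finset.sum_bij (fun k _ => (k : ℕ)) ?_ ?_ ?_ ?_
      · intro a ha
        simpa using ha
      · intro a _ b _ hab
        exact Fin.ext hab
      · intro b hb
        rw [Finset.mem_Ico] at hb
        exact ⟨⟨b, hb.2⟩, Finset.mem_filter.2 ⟨Finset.mem_univ _, Fin.le_def.2 hb.1⟩, rfl⟩
      · intros
        rfl
    have := Finset.sum_Ico_sub (f := β) (show (m : ℕ) ≤ K from m.2.le)
    rw [e, ← neg_inj, ← Finset.sum_neg_distrib]
    simp only [neg_sub]
    rw [this, hβK, zero_sub]
  rw [← hsum]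
  refine Finset.sum_le_sum fun k _ => ?_
  have hb : 0 ≤ β (k : ℕ) - β ((k : ℕ) + 1) := sub_nonneg.2 (hβa (Nat.le_succ _))
  open scoped ComplexOrder in
  have hB : (∑ i ∈ Finset.univ.filter (fun i : Fin K => i ≤ k ∧ i ≠ m),
      q i • outerH (h i)).PosSemidef :=
    Matrix.posSemidef_sum _ fun i _ =>
      (show (outerH (h i)).PosSemidef from Matrix.posSemidef_vecMulVec_star_self (h i)).smul (hq i)
  have := mul_le_mul_of_nonneg_left (aux_qform (h m) _ hB q₀ hq₀) hb
  linarith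
end
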